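/- For any disjunctive logic program Π and any consistent and complete set L of literals over atoms(Π), L is a stable model of Π if and only if L is a classical model of Π and no non-empty subset of L⁺ is an unfounded set on L with respect to Π. -/

import Mathlib

open scoped Classical

namespace AbstractSolvers

/-- Literals over atoms (natural numbers): an atom `a` or its negation `¬ a`. -/
inductive Lit where
  | pos : ℕ → Lit
  | neg : ℕ → Lit
deriving DecidableEq

/-- The complement of a literal. -/
def Lit.comp : Lit → Lit
  | .pos a => .neg a
  | .neg a => .pos a

/-- The atom of a literal. -/
def Lit.atom : Lit → ℕ
  | .pos a => a
  | .neg a => a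

def Lit.isPos : Lit → Bool
  | .pos _ => true
  | .neg _ => false

/-- A disjunctive rule `A ← B`: a head `A` (disjunction of atoms) and a body with a
positive part (atoms) and a negative part (atoms under negation as failure). -/
structure Rule where
  head : Finset ℕ
  pos : Finset ℕ
  neg : Finset ℕ
deriving DecidableEq

/-- A disjunctive logic program: a finite set of disjunctive rules. -/
abbrev Prog := Finset Rule

def Rule.atoms (r : Rule) : Finset ℕ := r.head ∪ r.pos ∪ r.neg

/-- The atoms occurring in a program. -/
def progAtoms (π : Prog) : Finset ℕ := π.sup Rule.atoms

/-- The atoms occurring in a set of literals. -/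
def atomsOfSet (M : Set Lit) : Set ℕ := Lit.atom '' M

/-- A set of literals is consistent if it contains no literal together with its complement. -/
def consistentSet (M : Set Lit) : Prop := ∀ l ∈ M, Lit.comp l ∉ M

/-- `M⁺`: the atoms occurring positively in `M`. -/
def posAtoms (M : Set Lit) : Set ℕ := {a | Lit.pos a ∈ M}

/-- The restriction of a set of literals to a set of atoms. -/
def restrictTo (M : Set Lit) (X : Set ℕ) : Set Lit := {l | l ∈ M ∧ Lit.atom l ∈ X}

/-- `M` is a complete set of literals over `X` if the atoms of `M` are exactly `X`. -/
def completeOver (M : Set Lit) (X : Set ℕ) : Prop := atomsOfSet M = X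

/-- The clause `A ∨ B̄` corresponding to a rule `A ← B` (as its set of literals). -/
def Rule.clause (r : Rule) : Set Lit :=
  (Lit.pos '' ↑r.head) ∪ (Lit.neg '' ↑r.pos) ∪ (Lit.pos '' ↑r.neg)

/-- `M` satisfies the rule `r` viewed as a clause. -/
def satRule (M : Set Lit) (r : Rule) : Prop := ∃ l ∈ Rule.clause r, l ∈ M

/-- A classical model of a program: a consistent and complete set of literals over the atoms
of the program satisfying every rule viewed as a clause. -/
def claModel (π : Prog) (M : Set Lit) : Prop :=
  consistentSet M ∧ completeOver M ↑(progAtoms π) ∧ ∀ r ∈ π, satRule M r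

/-- `r` (of the form `A ∨ a ← B`) is a supporting rule for `a` with respect to `M`
when `M ∩ (B̄ ∪ A) = ∅`. -/
def supportingRule (r : Rule) (a : ℕ) (M : Set Lit) : Prop :=
  a ∈ r.head ∧ (∀ b ∈ r.pos, Lit.neg b ∉ M) ∧ (∀ b ∈ r.neg, Lit.pos b ∉ M) ∧
    ∀ b ∈ r.head, b ≠ a → Lit.pos b ∉ M

/-- A supported model of a program. -/
def supModel (π : Prog) (M : Set Lit) : Prop :=
  claModel π M ∧ ∀ a, Lit.pos a ∈ M → ∃ r ∈ π, supportingRule r a M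

/-- `X` satisfies the reduct `π^Y`. -/
def satReduct (π : Prog) (Y X : Set ℕ) : Prop :=
  ∀ r ∈ π, (∀ b ∈ r.neg, b ∉ Y) → (∀ b ∈ r.pos, b ∈ X) → ∃ a ∈ r.head, a ∈ X

/-- `X` is an answer set of `π`: `X` is minimal among the sets of atoms satisfying `π^X`. -/
def answerSet (π : Prog) (X : Set ℕ) : Prop :=
  satReduct π X X ∧ ∀ Y ⊆ X, satReduct π X Y → Y = X

/-- A stable model of a program: a consistent and complete set `M` of literals over the atoms
of the program such that `M⁺` is an answer set. -/
def staModel (π : Prog) (M : Set Lit) : Prop :=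
  consistentSet M ∧ completeOver M ↑(progAtoms π) ∧ answerSet π (posAtoms M)

/-- `X` is unfounded on `L` with respect to `π`. -/
def unfounded (π : Prog) (L : Set Lit) (X : Set ℕ) : Prop :=
  ∀ a ∈ X, ∀ r ∈ π, a ∈ r.head →
    ((∃ b ∈ r.pos, Lit.neg b ∈ L) ∨ (∃ b ∈ r.neg, Lit.pos b ∈ L)) ∨
    (∃ b ∈ r.pos, b ∈ X) ∨
    (∃ b ∈ r.head, b ∉ X ∧ Lit.pos b ∈ L)

/-- The three types of models: classical, supported-, and stable. -/
inductive MType where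
  | cla | sup | sta

/-- `w`-models. -/
def isModel : MType → Prog → Set Lit → Prop
  | .cla => claModel
  | .sup => supModel
  | .sta => staModel

/-- A propagator condition (`p-condition`) maps a program and a set of literals to a set of
literals. -/
abbrev PCond := Prog → Set Lit → Set Lit

/-- A p-condition yields literals over the atoms of the program. -/
def isPCondition (p : PCond) : Prop :=
  ∀ (π : Prog) (M : Set Lit), ∀ l ∈ p π M, Lit.atom l ∈ progAtoms π

/-- The union of the outcomes of a set of p-conditions. -/
def pcOut (P : Set PCond) (π : Prog) (M : Set Lit) : Set Lit := ⋃ p ∈ P, p π M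

/-- The `UnitPropagate` p-condition. -/
def unitPropagate : PCond := fun π L =>
  {l | l ∉ L ∧ ∃ r ∈ π, l ∈ Rule.clause r ∧ ∀ l' ∈ Rule.clause r, l' ≠ l → Lit.comp l' ∈ L}

/-- The `AllRulesCancelled` p-condition. -/
def allRulesCancelled : PCond := fun π L =>
  {l | ∃ a, l = Lit.neg a ∧ Lit.neg a ∉ L ∧ ∀ r ∈ π, ¬ supportingRule r a L}

/-- The `BackchainTrue` p-condition. -/
def backchainTrue : PCond := fun π L =>
  {l | l ∉ L ∧ ∃ r ∈ π, ∃ a ∈ r.head, Lit.pos a ∈ L ∧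
    ((∃ b ∈ r.head, b ≠ a ∧ l = Lit.neg b) ∨ (∃ b ∈ r.pos, l = Lit.pos b) ∨
      (∃ b ∈ r.neg, l = Lit.neg b)) ∧
    ∀ r' ∈ π, r' ≠ r → ¬ supportingRule r' a L}

/-- The `Unfounded` p-condition. -/
def unfoundedCond : PCond := fun π L =>
  {l | ∃ a, l = Lit.neg a ∧ Lit.neg a ∉ L ∧ consistentSet L ∧
    ∃ X : Set ℕ, a ∈ X ∧ unfounded π L X}

/-- `up = {UnitPropagate}`. -/
def up : Set PCond := {unitPropagate}

/-- `sd = {UnitPropagate, AllRulesCancelled, BackchainTrue}`. -/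
def sd : Set PCond := {unitPropagate, allRulesCancelled, backchainTrue}

/-- `sm = {UnitPropagate, AllRulesCancelled, BackchainTrue, Unfounded}`. -/
def sm : Set PCond := {unitPropagate, allRulesCancelled, backchainTrue, unfoundedCond}

/-- `P` is `w`-sound. -/
def wSound (w : MType) (P : Set PCond) : Prop :=
  ∀ (π : Prog) (M M₁ : Set Lit), isModel w π M₁ → M ⊆ M₁ → pcOut P π M ⊆ M₁

/-- `P` is `w`-complete. -/
def wComplete (w : MType) (P : Set PCond) : Prop :=
  ∀ (π : Prog) (M : Set Lit), consistentSet M → completeOver M ↑(progAtoms π) →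
    (isModel w π M ↔ pcOut P π M = ∅)

/-- `P` is `w`-enforcing: both `w`-sound and `w`-complete. -/
def wEnforcing (w : MType) (P : Set PCond) : Prop := wSound w P ∧ wComplete w P

abbrev GenFun := Prog → Prog
abbrev WitFun := Prog → Set Lit → Prog

/-- `M` covers `π` when `atoms(π) ⊆ atoms(M)`. -/
def covers (M : Set Lit) (π : Prog) : Prop := (↑(progAtoms π) : Set ℕ) ⊆ atomsOfSet M

/-- A generating (program) function. -/
def isGenFun (g : GenFun) : Prop :=
  ∀ π : Prog, (↑(progAtoms π) : Set ℕ) ⊆ (↑(progAtoms (g π)) : Set ℕ)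

/-- A witness (program) function: on consistent covering sets of literals it yields
a non-disjunctive program. -/
def isWitFun (t : WitFun) : Prop :=
  ∀ (π : Prog) (M : Set Lit), consistentSet M → covers M π → ∀ r ∈ t π M, r.head.card ≤ 1

/-- `g` is `w₁`-approximating with respect to `w`. -/
def approximating (w₁ w : MType) (g : GenFun) : Prop :=
  ∀ π : Prog,
    (∀ L, staModel π L → ∃ L₁, isModel w₁ (g π) L₁ ∧ L = restrictTo L₁ ↑(progAtoms π)) ∧
    (∀ M, isModel w₁ (g π) M → isModel w π (restrictTo M ↑(progAtoms π)))

/-- `t` is `w₁`-ensuring with respect to `w`. -/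
def ensuring (w₁ w : MType) (t : WitFun) : Prop :=
  ∀ (π : Prog) (M : Set Lit), covers M π →
    isModel w π (restrictTo M ↑(progAtoms π)) →
    (staModel π (restrictTo M ↑(progAtoms π)) ↔ ¬ ∃ N, isModel w₁ (t π M) N)

/-- `(P, g)` is an approximating-pair with respect to `w`. -/
def approximatingPair (w : MType) (P : Set PCond) (g : GenFun) : Prop :=
  ∃ w₁, wEnforcing w₁ P ∧ approximating w₁ w g

/-- `(P, t)` is an ensuring-pair with respect to `w`. -/
def ensuringPair (w : MType) (P : Set PCond) (t : WitFun) : Prop :=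
  ∃ w₁, wEnforcing w₁ P ∧ ensuring w₁ w t

/-- An element of a record: a literal annotated as decision (`true`) or not, or `⊥`. -/
inductive RElem where
  | lit : Lit → Bool → RElem
  | bot : RElem
deriving DecidableEq

/-- A record is a string (list) of such elements. -/
abbrev Record := List RElem

def RElem.content : RElem → Option Lit
  | .lit l _ => some l
  | .bot => none

/-- The literal `l` occurs in the record `L` (possibly as a decision literal). -/
def Record.hasLit (L : Record) (l : Lit) : Prop := ∃ d, RElem.lit l d ∈ L

/-- The set of literals of a record. -/
def Record.lits (L : Record) : Set Lit := {l | Record.hasLit L l}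

/-- A record is inconsistent if it contains `⊥` or complementary literals. -/
def Record.incons (L : Record) : Prop :=
  RElem.bot ∈ L ∨ ∃ l, Record.hasLit L l ∧ Record.hasLit L (Lit.comp l)

/-- The record contains no decision literals. -/
def Record.noDec (L : Record) : Prop := ∀ l, RElem.lit l true ∉ L

/-- A record relative to the set `X` of atoms: no repetitions, and all literals over `X`. -/
def Record.wf (L : Record) (X : Set ℕ) : Prop :=
  (L.map RElem.content).Nodup ∧ ∀ l, Record.hasLit L l → Lit.atom l ∈ X

/-- An abstract transition graph, with a distinguished initial node, a `Failstate`,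
and `Ok(L)` nodes. -/
structure AbsGraph (σ : Type) where
  nodes : Set σ
  step : σ → σ → Prop
  init : σ
  fail : σ
  okP : σ → Prop
  okLits : σ → Set Lit

/-- The edges of the graph: steps between nodes of the graph. -/
def AbsGraph.edge {σ : Type} (G : AbsGraph σ) (s s' : σ) : Prop :=
  s ∈ G.nodes ∧ s' ∈ G.nodes ∧ G.step s s'

/-- The atoms of a family of sets of literals. -/
def atomsOfFam (N : Set (Set Lit)) : Set ℕ := ⋃ M ∈ N, atomsOfSet M

/-- The graph `G` checks the set `N` of sets of literals. -/
def checks {σ : Type} (G : AbsGraph σ) (N : Set (Set Lit)) : Prop :=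
  G.nodes.Finite ∧
  (∀ s : σ, ¬ Relation.TransGen G.edge s s) ∧
  (∀ s ∈ G.nodes, (∀ s', ¬ G.edge s s') → s = G.fail ∨ G.okP s) ∧
  (∀ s : σ, Relation.ReflTransGen G.edge G.init s → G.okP s →
    restrictTo (G.okLits s) (atomsOfFam N) ∈ N) ∧
  (Relation.ReflTransGen G.edge G.init G.fail ↔ N = ∅)

/-- Applicability of the `Conclude` rule. -/
def concludeApp (L : Record) : Prop := Record.incons L ∧ Record.noDec L

/-- Applicability of the `Backtrack` rule. -/
def backtrackApp (L : Record) : Prop :=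
  ∃ L₁ l L₂, L = L₁ ++ RElem.lit l true :: L₂ ∧ Record.incons L ∧ Record.noDec L₂

/-- Applicability of the `Propagate` rule for the set `P` of p-conditions. -/
def propagateApp (P : Set PCond) (π : Prog) (L : Record) : Prop :=
  ∃ l, l ∈ pcOut P π (Record.lits L)

/-- Applicability of the `Decide` rule over the atoms `X`. -/
def decideApp (X : Finset ℕ) (L : Record) : Prop :=
  ¬ Record.incons L ∧ ∃ l : Lit, Lit.atom l ∈ X ∧ ¬ Record.hasLit L l ∧
    ¬ Record.hasLit L (Lit.comp l)

/-- Basic states: records, `Ok(L)` states, and the `Failstate`. -/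
inductive BState where
  | rcd : Record → BState
  | ok : Record → BState
  | fail : BState

/-- The transition rules of the single-layer DPLL graph template `DPT_P(π)`
(`Conclude`, `Backtrack`, `Propagate`, `Decide`, `Success`). -/
inductive dptStep (P : Set PCond) (π : Prog) : BState → BState → Prop
  | conclude (L : Record) : Record.incons L → Record.noDec L →
      dptStep P π (BState.rcd L) BState.fail
  | backtrack (L₁ : Record) (l : Lit) (L₂ : Record) :
      Record.incons (L₁ ++ RElem.lit l true :: L₂) → Record.noDec L₂ →
      dptStep P π (BState.rcd (L₁ ++ RElem.lit l true :: L₂))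
        (BState.rcd (L₁ ++ [RElem.lit (Lit.comp l) false]))
  | propagate (L : Record) (l : Lit) : l ∈ pcOut P π (Record.lits L) →
      dptStep P π (BState.rcd L) (BState.rcd (L ++ [RElem.lit l false]))
  | decide (L : Record) (l : Lit) : ¬ Record.incons L → Lit.atom l ∈ progAtoms π →
      ¬ Record.hasLit L l → ¬ Record.hasLit L (Lit.comp l) →
      dptStep P π (BState.rcd L) (BState.rcd (L ++ [RElem.lit l true]))
  | success (L : Record) :
      ¬ (concludeApp L ∨ backtrackApp L ∨ propagateApp P π L ∨ decideApp (progAtoms π) L) →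
      dptStep P π (BState.rcd L) (BState.ok L)

/-- The single-layer DPLL graph template `DPT_P(π)`; with `P = up` it is the graph `DP_π`. -/
def DPT (P : Set PCond) (π : Prog) : AbsGraph BState where
  nodes := {s | match s with
    | BState.rcd L => Record.wf L ↑(progAtoms π)
    | BState.ok L => Record.wf L ↑(progAtoms π)
    | BState.fail => True}
  step := dptStep P π
  init := BState.rcd []
  fail := BState.fail
  okP := fun s => ∃ L, s = BState.ok L
  okLits := fun s => match s with
    | BState.ok L => Record.lits L
    | BState.rcd L => Record.lits L
    | BState.fail => ∅

/-- States of the two-layer graph: `(L,R)_s` (label `true` = 𝓛, `false` = 𝓡),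
`Ok(L)`, and `Failstate`. -/
inductive TLState where
  | st : Record → Record → Bool → TLState
  | ok : Record → TLState
  | fail : TLState

/-- `atoms(t, π, X)`: the union of the atoms of `t(π,L)` over all consistent and complete
sets `L` of literals over `X`. -/
def witAtoms (t : WitFun) (π : Prog) (X : Set ℕ) : Set ℕ :=
  ⋃ L ∈ {L : Set Lit | consistentSet L ∧ completeOver L X}, (↑(progAtoms (t π L)) : Set ℕ)

/-- Some left-rule applies to the state `(L, ∅)_𝓛`. -/
def leftApp (P : Set PCond) (gπ : Prog) (L : Record) : Prop :=
  concludeApp L ∨ backtrackApp L ∨ propagateApp P gπ L ∨ decideApp (progAtoms gπ) L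

/-- Some right-rule applies to the state `(L, R)_𝓡` (where `tπ` is the witness program
for `L`). -/
def rightApp (P : Set PCond) (tπ : Prog) (R : Record) : Prop :=
  concludeApp R ∨ backtrackApp R ∨ propagateApp P tπ R ∨ decideApp (progAtoms tπ) R

/-- The transition rules of the two-layer template graph `ST[PL, PR, g, t](π)`. -/
inductive tlStep (PL PR : Set PCond) (g : GenFun) (t : WitFun) (π : Prog) :
    TLState → TLState → Prop
  | concludeL (L : Record) : Record.incons L → Record.noDec L →
      tlStep PL PR g t π (TLState.st L [] true) TLState.fail
  | backtrackL (L₁ : Record) (l : Lit) (L₂ : Record) :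
      Record.incons (L₁ ++ RElem.lit l true :: L₂) → Record.noDec L₂ →
      tlStep PL PR g t π (TLState.st (L₁ ++ RElem.lit l true :: L₂) [] true)
        (TLState.st (L₁ ++ [RElem.lit (Lit.comp l) false]) [] true)
  | propagateL (L : Record) (l : Lit) : l ∈ pcOut PL (g π) (Record.lits L) →
      tlStep PL PR g t π (TLState.st L [] true)
        (TLState.st (L ++ [RElem.lit l false]) [] true)
  | decideL (L : Record) (l : Lit) : ¬ Record.incons L → Lit.atom l ∈ progAtoms (g π) →
      ¬ Record.hasLit L l → ¬ Record.hasLit L (Lit.comp l) →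
      tlStep PL PR g t π (TLState.st L [] true)
        (TLState.st (L ++ [RElem.lit l true]) [] true)
  | cross (L : Record) : ¬ leftApp PL (g π) L →
      tlStep PL PR g t π (TLState.st L [] true) (TLState.st L [] false)
  | concludeR (L R : Record) : Record.incons R → Record.noDec R →
      tlStep PL PR g t π (TLState.st L R false) (TLState.ok L)
  | backtrackR (L R₁ : Record) (l : Lit) (R₂ : Record) :
      Record.incons (R₁ ++ RElem.lit l true :: R₂) → Record.noDec R₂ →
      tlStep PL PR g t π (TLState.st L (R₁ ++ RElem.lit l true :: R₂) false)
        (TLState.st L (R₁ ++ [RElem.lit (Lit.comp l) false]) false)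
  | propagateR (L R : Record) (l : Lit) :
      l ∈ pcOut PR (t π (Record.lits L)) (Record.lits R) →
      tlStep PL PR g t π (TLState.st L R false)
        (TLState.st L (R ++ [RElem.lit l false]) false)
  | decideR (L R : Record) (l : Lit) : ¬ Record.incons R →
      Lit.atom l ∈ progAtoms (t π (Record.lits L)) →
      ¬ Record.hasLit R l → ¬ Record.hasLit R (Lit.comp l) →
      tlStep PL PR g t π (TLState.st L R false)
        (TLState.st L (R ++ [RElem.lit l true]) false)
  | concludeRL (L R : Record) : ¬ rightApp PR (t π (Record.lits L)) R → Record.noDec L →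
      tlStep PL PR g t π (TLState.st L R false) TLState.fail
  | backtrackRL (L₁ : Record) (l : Lit) (L₂ R : Record) :
      ¬ rightApp PR (t π (Record.lits (L₁ ++ RElem.lit l true :: L₂))) R →
      Record.noDec L₂ →
      tlStep PL PR g t π (TLState.st (L₁ ++ RElem.lit l true :: L₂) R false)
        (TLState.st (L₁ ++ [RElem.lit (Lit.comp l) false]) [] true)

/-- The two-layer template graph `ST[PL, PR, g, t](π)`. -/
def TL (PL PR : Set PCond) (g : GenFun) (t : WitFun) (π : Prog) : AbsGraph TLState where
  nodes := {s | match s with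
    | TLState.st L R _ => Record.wf L ↑(progAtoms (g π)) ∧
        Record.wf R (witAtoms t π ↑(progAtoms (g π)))
    | TLState.ok L => Record.wf L ↑(progAtoms (g π))
    | TLState.fail => True}
  step := tlStep PL PR g t π
  init := TLState.st [] [] true
  fail := TLState.fail
  okP := fun s => ∃ L, s = TLState.ok L
  okLits := fun s => match s with
    | TLState.ok L => Record.lits L
    | TLState.st L _ _ => Record.lits L
    | TLState.fail => ∅

/-- The rule corresponding to a clause with positive atoms `P` and negated atoms `N`,
under the identification of CNF formulas with programs. -/
def mkClause (P N : Finset ℕ) : Rule := ⟨∅, N, P⟩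

/-! The unfounded subsets of `L⁺`, for a classical model `L`, are exactly the `X ⊆ L⁺` such that
`L⁺ \ X` still satisfies the reduct: the three cases in the definition of unfoundedness say that
the body of the rule is falsified by `L`, that it is lost when `X` is removed, or that the head
survives the removal. Hence minimality of `L⁺` is the absence of nonempty such subsets. -/

/-- `L` is two-valued on `X`: of every atom of `X` it contains exactly one of the two literals.
This is the combination of consistency and completeness, localized to the atoms in `X`. -/
def twoValuedOn (L : Set Lit) (X : Set ℕ) : Prop :=
  ∀ a ∈ X, Lit.neg a ∈ L ↔ a ∉ posAtoms L

section TwoValued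

variable {π : Prog} {L : Set Lit} {X Y : Set ℕ} {r : Rule}

theorem mem_posAtoms {a : ℕ} : a ∈ posAtoms L ↔ Lit.pos a ∈ L := Iff.rfl

theorem twoValuedOn.mono (hL : twoValuedOn L Y) (hXY : X ⊆ Y) : twoValuedOn L X :=
  fun a ha => hL a (hXY ha)

theorem consistentSet.twoValuedOn (hcons : consistentSet L) (hcomp : completeOver L X) :
    twoValuedOn L X := by
  refine fun a ha => ⟨hcons (Lit.neg a), fun hpos => ?_⟩
  rw [← hcomp] at ha
  obtain ⟨_ | _, hl, rfl⟩ := ha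
  exacts [absurd hl hpos, hl]

theorem pos_subset_progAtoms (hr : r ∈ π) : r.pos ⊆ progAtoms π :=
  calc r.pos ⊆ r.head ∪ r.pos := Finset.subset_union_right
    _ ⊆ r.atoms := Finset.subset_union_left
    _ ⊆ progAtoms π := Finset.le_sup (f := Rule.atoms) hr

theorem satRule_iff_exists :
    satRule L r ↔
      (∃ a ∈ r.head, Lit.pos a ∈ L) ∨ (∃ b ∈ r.pos, Lit.neg b ∈ L) ∨
        ∃ b ∈ r.neg, Lit.pos b ∈ L := by
  simp only [satRule, Rule.clause, Set.mem_union, Set.mem_image, Finset.mem_coe, or_and_right,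
    exists_or, or_assoc, exists_exists_and_eq_and]

theorem twoValuedOn.satRule_iff (hL : twoValuedOn L r.pos) :
    satRule L r ↔
      ((∀ b ∈ r.neg, b ∉ posAtoms L) → (∀ b ∈ r.pos, b ∈ posAtoms L) →
        ∃ a ∈ r.head, a ∈ posAtoms L) := by
  have hneg : (∃ b ∈ r.pos, Lit.neg b ∈ L) ↔ ∃ b ∈ r.pos, b ∉ posAtoms L :=
    exists_congr fun b => and_congr_right (hL b)
  rw [satRule_iff_exists, hneg]
  grind [mem_posAtoms]

theorem satReduct_posAtoms_iff_forall_satRule (hL : ∀ r ∈ π, twoValuedOn L r.pos) :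
    satReduct π (posAtoms L) (posAtoms L) ↔ ∀ r ∈ π, satRule L r :=
  forall₂_congr fun r hr => (hL r hr).satRule_iff.symm

theorem unfounded_of_satReduct_diff (hL : ∀ r ∈ π, twoValuedOn L r.pos)
    (hred : satReduct π (posAtoms L) (posAtoms L \ X)) : unfounded π L X := by
  intro a _ r hr _
  by_cases hneg : ∃ b ∈ r.neg, Lit.pos b ∈ L
  · exact .inl (.inr hneg)
  by_cases hpos : ∃ b ∈ r.pos, Lit.neg b ∈ L
  · exact .inl (.inl hpos)
  by_cases hX : ∃ b ∈ r.pos, b ∈ X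
  · exact .inr (.inl hX)
  push Not at hneg hpos hX
  have hbody : ∀ b ∈ r.pos, b ∈ posAtoms L \ X := fun b hb =>
    ⟨not_not.1 fun h => hpos b hb ((hL r hr b hb).2 h), hX b hb⟩
  obtain ⟨c, hc, hcL, hcX⟩ := hred r hr hneg hbody
  exact .inr (.inr ⟨c, hc, hcX, hcL⟩)

theorem unfounded.satReduct_diff (hunf : unfounded π L X) (hL : ∀ r ∈ π, twoValuedOn L r.pos)
    (hred : satReduct π (posAtoms L) (posAtoms L)) :
    satReduct π (posAtoms L) (posAtoms L \ X) := by
  intro r hr hneg hbody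
  obtain ⟨a, ha, haL⟩ := hred r hr hneg fun b hb => (hbody b hb).1
  by_cases haX : a ∈ X
  · rcases hunf a haX r hr ha with
      (⟨b, hb, hbL⟩ | ⟨b, hb, hbL⟩) | ⟨b, hb, hbX⟩ | ⟨b, hb, hbX, hbL⟩
    · exact absurd (hbody b hb).1 ((hL r hr b hb).1 hbL)
    · exact absurd hbL (hneg b hb)
    · exact absurd hbX (hbody b hb).2
    · exact ⟨b, hb, hbL, hbX⟩
  · exact ⟨a, ha, haL, haX⟩

theorem satReduct_diff_iff_unfounded (hL : ∀ r ∈ π, twoValuedOn L r.pos)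
    (hred : satReduct π (posAtoms L) (posAtoms L)) :
    satReduct π (posAtoms L) (posAtoms L \ X) ↔ unfounded π L X :=
  ⟨unfounded_of_satReduct_diff hL, fun hunf => hunf.satReduct_diff hL hred⟩

theorem answerSet_iff_forall_not_satReduct_diff :
    answerSet π Y ↔
      satReduct π Y Y ∧ ∀ X ⊆ Y, X.Nonempty → ¬ satReduct π Y (Y \ X) := by
  refine and_congr_right fun _ => ⟨fun hmin X hX hne hred => ?_, fun h Z hZ hred => ?_⟩
  · have hdisj : Disjoint Y X := sdiff_eq_left.1 (hmin _ Set.sdiff_subset hred)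
    exact hne.ne_empty (hdisj.eq_bot_of_ge hX)
  · by_contra hne
    have hdiff : (Y \ Z).Nonempty := Set.sdiff_nonempty.2 fun hYZ => hne (hZ.antisymm hYZ)
    exact h (Y \ Z) Set.sdiff_subset hdiff (by rwa [Set.sdiff_sdiff_cancel_left hZ])

theorem statement0_general (hL : ∀ r ∈ π, twoValuedOn L r.pos) :
    answerSet π (posAtoms L) ↔
      (∀ r ∈ π, satRule L r) ∧
        ∀ X : Set ℕ, X ⊆ posAtoms L → X.Nonempty → ¬ unfounded π L X := by
  rw [answerSet_iff_forall_not_satReduct_diff, ← satReduct_posAtoms_iff_forall_satRule hL]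
  exact and_congr_right fun hred =>
    forall₃_congr fun _ _ _ => not_congr (satReduct_diff_iff_unfounded hL hred)

end TwoValued

/-- For any disjunctive logic program `π` and any consistent and complete set `L`
of literals over `atoms(π)`, `L` is a stable model of `π` iff `L` is a classical model of `π`
and no non-empty subset of `L⁺` is an unfounded set on `L` with respect to `π`. -/
theorem statement0 (π : Prog) (L : Set Lit)
    (hcons : consistentSet L) (hcomp : completeOver L ↑(progAtoms π)) :
    staModel π L ↔
      claModel π L ∧ ∀ X : Set ℕ, X ⊆ posAtoms L → X.Nonempty → ¬ unfounded π L X := by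
  simp only [staModel, claModel, and_assoc, statement0_general fun _ hr =>
    (hcons.twoValuedOn hcomp).mono (Finset.coe_subset.2 (pos_subset_progAtoms hr))]

end AbstractSolvers
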